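/- Let k ∈ {3, 4, 6} and let ξ ∈ ℂ be a primitive k-th root of unity. Let Λ be a nonzero additive subgroup of ℂ such that ξ·Λ ⊆ Λ, and suppose that Λ is contained in a ℚ-linear subspace of ℂ (viewing ℂ as a vector space over ℚ) of dimension at most 2. Then there exists a nonzero c ∈ ℂ such that c·Λ ⊆ ℚ + ℚξ, i.e. after multiplying by c every element of Λ is a ℚ-linear combination of 1 and ξ. -/

import Mathlib

/-- For k ∈ {3,4,6} and ξ a primitive k-th root of unity: a nonzero ξ-invariant
additive subgroup of ℂ contained in a ℚ-subspace of dimension at most 2 can be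
scaled by some nonzero c ∈ ℂ to lie in ℚ + ℚξ. -/
theorem stmt_4 (k : ℕ) (hk : k ∈ ({3, 4, 6} : Set ℕ)) (ξ : ℂ)
    (hξ : ξ ^ k = 1) (hprim : ∀ j : ℕ, 0 < j → j < k → ξ ^ j ≠ 1)
    (Λ : AddSubgroup ℂ) (hΛ : Λ ≠ ⊥) (hinv : ∀ z ∈ Λ, ξ * z ∈ Λ)
    (a b : ℂ) (hspan : ∀ z ∈ Λ, ∃ q r : ℚ, z = q • a + r • b) :
    ∃ c : ℂ, c ≠ 0 ∧ ∀ z ∈ Λ, ∃ q r : ℚ, c * z = (q : ℂ) + (r : ℂ) * ξ := by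
  have hirr : ∀ t : ℚ, ξ ≠ (t : ℂ) := by
    intro t ht
    have h1 : t ^ k = 1 := by
      rw [ht] at hξ
      exact_mod_cast hξ
    have h12 : (t ^ 2) ^ 6 = 1 := by
      rcases hk with rfl | rfl | rfl
      · calc (t ^ 2) ^ 6 = (t ^ 3) ^ 4 := by ring
          _ = 1 := by rw [h1]; norm_num
      · calc (t ^ 2) ^ 6 = (t ^ 4) ^ 3 := by ring
          _ = 1 := by rw [h1]; norm_num
      · calc (t ^ 2) ^ 6 = (t ^ 6) ^ 2 := by ring
          _ = 1 := by rw [h1]; norm_num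
    have h2 : t ^ 2 = 1 := (pow_eq_one_iff_of_nonneg (sq_nonneg t) (by norm_num)).1 h12
    have hk2 : 2 < k := by
      rcases hk with rfl | rfl | rfl <;> norm_num
    apply hprim 2 (by norm_num) hk2
    rw [ht]
    exact_mod_cast h2
  obtain ⟨⟨w, hw⟩, hx⟩ := AddSubgroup.ne_bot_iff_exists_ne_zero.1 hΛ
  have hw0 : w ≠ 0 := fun h => hx (Subtype.ext h)
  obtain ⟨q1, r1, e1⟩ := hspan w hw
  obtain ⟨q2, r2, e2⟩ := hspan _ (hinv w hw)
  simp only [Rat.smul_def] at e1 e2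
  have hD : q1 * r2 - r1 * q2 ≠ 0 := by
    intro hD
    have hDc : (q1 : ℂ) * r2 - r1 * q2 = 0 := by exact_mod_cast hD
    have hq : ((q2 : ℂ) - q1 * ξ) * w = 0 := by
      linear_combination (q2 : ℂ) * e1 - q1 * e2 - b * hDc
    have hr : ((r2 : ℂ) - r1 * ξ) * w = 0 := by
      linear_combination (r2 : ℂ) * e1 - r1 * e2 + a * hDc
    have hq := (mul_eq_zero.1 hq).resolve_right hw0
    have hr := (mul_eq_zero.1 hr).resolve_right hw0
    by_cases h1 : q1 = 0
    · by_cases h2 : r1 = 0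
      · apply hw0
        rw [e1, h1, h2]
        simp
      · apply hirr (r2 / r1)
        have : (r1 : ℂ) ≠ 0 := by exact_mod_cast h2
        push_cast
        rw [eq_div_iff this]
        linear_combination -hr
    · apply hirr (q2 / q1)
      have : (q1 : ℂ) ≠ 0 := by exact_mod_cast h1
      push_cast
      rw [eq_div_iff this]
      linear_combination -hq
  have hDc : (q1 : ℂ) * r2 - r1 * q2 ≠ 0 := by exact_mod_cast hD
  refine ⟨w⁻¹, inv_ne_zero hw0, fun z hz => ?_⟩
  obtain ⟨q, r, e⟩ := hspan z hz
  simp only [Rat.smul_def] at e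
  refine ⟨(q * r2 - r * q2) / (q1 * r2 - r1 * q2), (r * q1 - q * r1) / (q1 * r2 - r1 * q2), ?_⟩
  push_cast
  rw [inv_mul_eq_iff_eq_mul₀ hw0, div_mul_eq_mul_div, ← add_div, ← mul_div_assoc, eq_div_iff hDc]
  linear_combination ((q1 : ℂ) * r2 - r1 * q2) * e - ((q : ℂ) * r2 - r * q2) * e1
    - ((r : ℂ) * q1 - q * r1) * e2
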